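/- If p ∈ ℤⁿ satisfies gcd(p₁,…,pₙ) = 1, then for any a ∈ ℤⁿ, setting κ' = gcd{aᵢpⱼ − aⱼpᵢ : i < j}, the vector a − ⟨u,a⟩·p is divisible by κ' in ℤⁿ, where u ∈ ℤⁿ is any vector with ⟨u,p⟩ = 1. -/

import Mathlib

theorem sum_mul_mul_sub_sum_mul_mul {ι R : Type*} [CommRing R] (s : Finset ι)
    (u a p : ι → R) (i : ι) :
    (∑ j ∈ s, u j * p j) * a i - (∑ j ∈ s, u j * a j) * p i =
      ∑ j ∈ s, u j * (a i * p j - a j * p i) := by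
  rw [Finset.sum_mul, Finset.sum_mul, ← Finset.sum_sub_distrib]
  exact Finset.sum_congr rfl fun j _ => by ring

theorem gcd_filter_lt_dvd_of_alternating {ι R : Type*} [Fintype ι] [LinearOrder ι]
    [CommRing R] [NormalizedGCDMonoid R] {f : ι × ι → R}
    (f_diag : ∀ i, f (i, i) = 0) (f_swap : ∀ i j, f (j, i) = -f (i, j)) (i j : ι) :
    (Finset.univ.filter fun ij : ι × ι => ij.1 < ij.2).gcd f ∣ f (i, j) := by
  have dvd_of_lt {k l : ι} (hkl : k < l) :
      (Finset.univ.filter fun ij : ι × ι => ij.1 < ij.2).gcd f ∣ f (k, l) :=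
    Finset.gcd_dvd (Finset.mem_filter_univ (k, l) |>.mpr hkl)
  rcases lt_trichotomy i j with hij | rfl | hji
  · exact dvd_of_lt hij
  · rw [f_diag]
    exact dvd_zero _
  · rw [f_swap, dvd_neg]
    exact dvd_of_lt hji

theorem gcd_minors_dvd_combination_general {ι R : Type*} [Fintype ι] [LinearOrder ι]
    [CommRing R] [NormalizedGCDMonoid R] (p a u : ι → R) (i : ι) :
    (Finset.univ.filter fun ij : ι × ι => ij.1 < ij.2).gcd
        (fun ij => a ij.1 * p ij.2 - a ij.2 * p ij.1)
      ∣ (∑ j, u j * p j) * a i - (∑ j, u j * a j) * p i := by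
  rw [sum_mul_mul_sub_sum_mul_mul]
  refine Finset.dvd_sum fun j _ => Dvd.dvd.mul_left ?_ (u j)
  exact gcd_filter_lt_dvd_of_alternating (f := fun ij => a ij.1 * p ij.2 - a ij.2 * p ij.1)
    (fun _ => sub_self _) (fun _ _ => (neg_sub _ _).symm) i j

/-- If p ∈ ℤⁿ satisfies gcd(p₁,…,pₙ) = 1, then for any a ∈ ℤⁿ, setting
κ' = gcd{aᵢpⱼ − aⱼpᵢ : i < j}, the vector a − ⟨u,a⟩·p is divisible by κ' in ℤⁿ,
where u ∈ ℤⁿ is any vector with ⟨u,p⟩ = 1. -/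
theorem gcd_minors_dvd_combination (n : ℕ) (p a u : Fin n → ℤ)
    (hgcd : Finset.univ.gcd p = 1) (hu : ∑ j, u j * p j = 1) :
    ∀ i, (Finset.univ.filter (fun ij : Fin n × Fin n => ij.1 < ij.2)).gcd
        (fun ij => a ij.1 * p ij.2 - a ij.2 * p ij.1)
      ∣ a i - (∑ j, u j * a j) * p i := by
  intro i
  simpa only [hu, one_mul] using gcd_minors_dvd_combination_general p a u i
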